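/- arXiv:2410.21957 — 4 statements merged into one kernel-verified Lean document; each statement's English description precedes it below -/
import Mathlib

section
/- Let n ≥ 1. Define 𝒯' : X → X by 𝒯'(θ, a, b) = (2b − θ, Σᵢ₌₁ⁿ bᵢ² − a, b), where (2b − θ)ᵢ = 2bᵢ − θᵢ. Then: (i) 𝒯' is well-defined, i.e. 𝒯'(Φ) satisfies the creative condition whenever Φ does; (ii) 𝒯'(𝒯'(Φ)) = Φ for every Φ ∈ X; (iii) the fixed point set of 𝒯' on X is exactly Y; and (iv) there exists Φ ∈ GX with 𝒯'(Φ) ∉ GX. Hence 𝒯' is a fake Legendre involution, distinct from the Legendre involution L. -/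
open scoped BigOperators

/-- Triples `(θ, a, b)` encoding maps `ℝⁿ → ℝ^{2n+1}`. -/
abbrev TripleMap (n : ℕ) :=
  ((Fin n → ℝ) → Fin n → ℝ) × ((Fin n → ℝ) → ℝ) × ((Fin n → ℝ) → Fin n → ℝ)

/-- All three components are `C^∞`. -/
def SmoothTriple (n : ℕ) (Φ : TripleMap n) : Prop :=
  ContDiff ℝ (⊤ : ℕ∞) Φ.1 ∧ ContDiff ℝ (⊤ : ℕ∞) Φ.2.1 ∧ ContDiff ℝ (⊤ : ℕ∞) Φ.2.2

/-- The creative condition (*): `da = ∑ᵢ bᵢ dθᵢ`. -/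
def Creative (n : ℕ) (Φ : TripleMap n) : Prop :=
  ∀ x v : Fin n → ℝ,
    fderiv ℝ Φ.2.1 x v = ∑ i, Φ.2.2 x i * fderiv ℝ (fun y => Φ.1 y i) x v

/-- `RegPts f` is the set of regular points of `f : ℝⁿ → ℝⁿ`, i.e. points where
the differential is invertible. -/
def RegPts (n : ℕ) (f : (Fin n → ℝ) → Fin n → ℝ) : Set (Fin n → ℝ) :=
  {x | Function.Bijective (fderiv ℝ f x)}

/-- `X`: smooth triples satisfying the creative condition. -/
def Xset (n : ℕ) : Set (TripleMap n) := {Φ | SmoothTriple n Φ ∧ Creative n Φ}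

/-- `GX`: elements of `X` such that `Reg θ` and `Reg b` are dense. -/
def GXset (n : ℕ) : Set (TripleMap n) :=
  {Φ | SmoothTriple n Φ ∧ Creative n Φ ∧ Dense (RegPts n Φ.1) ∧ Dense (RegPts n Φ.2.2)}

/-- `Y`: triples of the form `(θ, ½∑θᵢ², θ)` with `θ` smooth. -/
def Yset (n : ℕ) : Set (TripleMap n) :=
  {Φ | ∃ θ : (Fin n → ℝ) → Fin n → ℝ, ContDiff ℝ (⊤ : ℕ∞) θ ∧
    Φ = (θ, fun x => (1 / 2) * ∑ i, θ x i ^ 2, θ)}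

/-- `GY`: triples of the form `(θ, ½∑θᵢ², θ)` with `θ` smooth and `Reg θ` dense. -/
def GYset (n : ℕ) : Set (TripleMap n) :=
  {Φ | ∃ θ : (Fin n → ℝ) → Fin n → ℝ, ContDiff ℝ (⊤ : ℕ∞) θ ∧ Dense (RegPts n θ) ∧
    Φ = (θ, fun x => (1 / 2) * ∑ i, θ x i ^ 2, θ)}

/-- The Legendre involution `L(θ, a, b) = (b, ∑ᵢ bᵢθᵢ − a, θ)`. -/
def Legendre (n : ℕ) (Φ : TripleMap n) : TripleMap n :=
  (Φ.2.2, fun x => (∑ i, Φ.2.2 x i * Φ.1 x i) - Φ.2.1 x, Φ.1)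

/-- Packing a triple `(θ, a, b)` into a single map `ℝⁿ → ℝ^{2n+1}`
(realized as `ℝⁿ × ℝ × ℝⁿ`). -/
def packTriple (n : ℕ) (Φ : TripleMap n) : (Fin n → ℝ) → (Fin n → ℝ) × ℝ × (Fin n → ℝ) :=
  fun x => (Φ.1 x, Φ.2.1 x, Φ.2.2 x)

/-- The fake Legendre involution of CASE II-2: `𝒯'(θ, a, b) = (2b − θ, ∑ᵢbᵢ² − a, b)`. -/
def fakeT' (n : ℕ) (Φ : TripleMap n) : TripleMap n :=
  (fun x i => 2 * Φ.2.2 x i - Φ.1 x i, fun x => (∑ i, Φ.2.2 x i ^ 2) - Φ.2.1 x, Φ.2.2)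

/-- `𝒯'` preserves the creative condition and smoothness. -/
theorem fakeT'_mem_Xset {n : ℕ} {Φ : TripleMap n} (hΦ : Φ ∈ Xset n) :
    fakeT' n Φ ∈ Xset n := by
  obtain ⟨θ, a, b⟩ := Φ
  obtain ⟨⟨hθ, ha, hb⟩, hc⟩ := hΦ
  dsimp only at hθ ha hb
  have hθi := contDiff_pi.1 hθ
  have hbi := contDiff_pi.1 hb
  refine ⟨⟨contDiff_pi.2 fun i => (contDiff_const.mul (hbi i)).sub (hθi i),
    (ContDiff.sum fun i _ => (hbi i).pow 2).sub ha, hb⟩, fun x v => ?_⟩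
  have dθ : ∀ i, HasFDerivAt (fun y => θ y i) (fderiv ℝ (fun y => θ y i) x) x := fun i =>
    ((hθi i).differentiable (by simp) x).hasFDerivAt
  have db : ∀ i, HasFDerivAt (fun y => b y i) (fderiv ℝ (fun y => b y i) x) x := fun i =>
    ((hbi i).differentiable (by simp) x).hasFDerivAt
  have da : HasFDerivAt a (fderiv ℝ a x) x := (ha.differentiable (by simp) x).hasFDerivAt
  have hcx := hc x v
  have hA : fderiv ℝ (fun y => (∑ i, b y i ^ 2) - a y) x = _ :=
    ((HasFDerivAt.fun_sum (u := Finset.univ) fun i _ => (db i).pow 2).sub da).fderiv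
  have hT : ∀ i, fderiv ℝ (fun y => 2 * b y i - θ y i) x = _ := fun i =>
    (((db i).const_mul 2).sub (dθ i)).fderiv
  simp only [fakeT', hA, hT] at hcx ⊢
  simp only [sub_apply, sum_apply, smul_apply, hcx, ← Finset.sum_sub_distrib]
  refine Finset.sum_congr rfl fun i _ => ?_
  simp
  ring

theorem fakeT'_fakeT' {n : ℕ} (Φ : TripleMap n) : fakeT' n (fakeT' n Φ) = Φ := by
  simp [fakeT']

theorem fakeT'_eq_self_iff {n : ℕ} {Φ : TripleMap n} (hθ : ContDiff ℝ (⊤ : ℕ∞) Φ.1) :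
    fakeT' n Φ = Φ ↔ Φ ∈ Yset n := by
  constructor
  · obtain ⟨θ, a, b⟩ := Φ
    intro h
    simp only [fakeT', Prod.mk.injEq, and_true] at h
    obtain ⟨h₁, h₂⟩ := h
    have hb : b = θ := by
      funext x i
      have := congrFun (congrFun h₁ x) i
      linarith
    subst hb
    refine ⟨b, hθ, ?_⟩
    simp only [Prod.mk.injEq, true_and, and_true]
    funext x
    have := congrFun h₂ x
    linarith
  · rintro ⟨θ, -, rfl⟩
    simp only [fakeT', Prod.mk.injEq, and_true]
    constructor
    · funext x i
      ring
    · funext x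
      ring

theorem regPts_smul_id {n : ℕ} {c : ℝ} (hc : c ≠ 0) :
    RegPts n (fun x i => c * x i) = Set.univ := by
  refine Set.eq_univ_of_forall fun x => ?_
  have h : HasFDerivAt (fun (x : Fin n → ℝ) i => c * x i)
      (c • ContinuousLinearMap.id ℝ (Fin n → ℝ)) x := (hasFDerivAt_id x).const_smul c
  change Function.Bijective (fderiv ℝ _ x)
  rw [h.fderiv]
  exact (MulAction.bijective₀ hc : Function.Bijective fun v : Fin n → ℝ => c • v)

theorem regPts_const {n : ℕ} (hn : 1 ≤ n) (c : Fin n → ℝ) :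
    RegPts n (fun _ => c) = ∅ := by
  refine Set.eq_empty_of_forall_notMem fun x hx => ?_
  have : Nonempty (Fin n) := ⟨⟨0, hn⟩⟩
  obtain ⟨v, hv⟩ := exists_ne (0 : Fin n → ℝ)
  exact hv (hx.1 (by simp))

/-- The triple `(2x, ∑ᵢ xᵢ², x)`, whose image under `𝒯'` has vanishing first component. -/
def doubledIdentityTriple (n : ℕ) : TripleMap n :=
  (fun x i => 2 * x i, fun x => ∑ i, x i ^ 2, fun x => x)

theorem doubledIdentityTriple_mem_GXset (n : ℕ) : doubledIdentityTriple n ∈ GXset n := by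
  refine ⟨⟨?_, ?_, contDiff_id⟩, fun x v => ?_, ?_, ?_⟩
  · exact contDiff_pi.2 fun i => contDiff_const.mul (contDiff_apply ℝ ℝ i)
  · exact ContDiff.sum (s := Finset.univ) fun (i : Fin n) _ => (contDiff_apply ℝ ℝ i).pow 2
  · have d : ∀ i, HasFDerivAt (fun y : Fin n → ℝ => y i)
        (ContinuousLinearMap.proj (R := ℝ) (φ := fun _ : Fin n => ℝ) i) x := fun i =>
      hasFDerivAt_apply i x
    have hA : fderiv ℝ (fun y : Fin n → ℝ => ∑ i, y i ^ 2) x = _ :=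
      (HasFDerivAt.fun_sum (u := Finset.univ) fun i _ => (d i).pow 2).fderiv
    have hT : ∀ i, fderiv ℝ (fun y : Fin n → ℝ => 2 * y i) x = _ := fun i =>
      ((d i).const_mul 2).fderiv
    simp only [doubledIdentityTriple, hA, hT, sum_apply]
    refine Finset.sum_congr rfl fun i _ => ?_
    simp
    ring
  · simp [doubledIdentityTriple, regPts_smul_id]
  · have h := regPts_smul_id (n := n) (one_ne_zero (α := ℝ))
    simp only [one_mul] at h
    simp [doubledIdentityTriple, h]

theorem fakeT'_doubledIdentityTriple_notMem_GXset {n : ℕ} (hn : 1 ≤ n) :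
    fakeT' n (doubledIdentityTriple n) ∉ GXset n := by
  rintro ⟨-, -, h, -⟩
  have h0 : (fakeT' n (doubledIdentityTriple n)).1 = fun _ => 0 := by
    funext x i
    simp [fakeT', doubledIdentityTriple]
  rw [h0, regPts_const hn] at h
  simpa using h.nonempty

theorem fakeT'_doubledIdentityTriple_ne_legendre {n : ℕ} (hn : 1 ≤ n) :
    fakeT' n (doubledIdentityTriple n) ≠ Legendre n (doubledIdentityTriple n) := by
  intro h
  have := congrFun (congrFun (congrArg Prod.fst h) fun _ => 1) ⟨0, hn⟩
  simp [fakeT', doubledIdentityTriple, Legendre] at this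

/-- `𝒯'(θ, a, b) = (2b − θ, ∑ᵢbᵢ² − a, b)` is a fake Legendre involution: it maps `X`
to `X`, is an involution of `X`, its fixed point set on `X` is exactly `Y`, but it does
not map `GX` into `GX`; in particular it is distinct from the Legendre involution. -/
theorem fakeT'_is_fake_legendre_involution (n : ℕ) (hn : 1 ≤ n) :
    (∀ Φ ∈ Xset n, fakeT' n Φ ∈ Xset n) ∧
    (∀ Φ ∈ Xset n, fakeT' n (fakeT' n Φ) = Φ) ∧
    (∀ Φ ∈ Xset n, (fakeT' n Φ = Φ ↔ Φ ∈ Yset n)) ∧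
    (∃ Φ ∈ GXset n, fakeT' n Φ ∉ GXset n) ∧
    (∃ Φ ∈ GXset n, fakeT' n Φ ≠ Legendre n Φ) :=
  ⟨fun _ hΦ => fakeT'_mem_Xset hΦ, fun Φ _ => fakeT'_fakeT' Φ,
    fun _ hΦ => fakeT'_eq_self_iff hΦ.1.1,
    ⟨_, doubledIdentityTriple_mem_GXset n, fakeT'_doubledIdentityTriple_notMem_GXset hn⟩,
    ⟨_, doubledIdentityTriple_mem_GXset n, fakeT'_doubledIdentityTriple_ne_legendre hn⟩⟩
end

section
/- Let n ≥ 1, let i₀ ∈ {1, …, n}, let θ = (θ₁, …, θₙ) : ℝⁿ → ℝⁿ be a smooth map with Reg(θ) dense in ℝⁿ, and let λ ∈ ℝ. Define Φ_λ = (θ, ½Σᵢ₌₁ⁿ θᵢ² + λθ_{i₀}², b) where bᵢ = θᵢ for i ≠ i₀ and b_{i₀} = (1 + 2λ)θ_{i₀}. Then Φ_λ satisfies the creative condition; if λ ≠ −1/2 then Φ_λ ∈ GX (the Jacobian determinant of b is (1 + 2λ) times that of θ); and if λ ≠ 0 then Φ_λ ∉ GY. -/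
open scoped BigOperators

/-- The linear map multiplying the `i₀`-th coordinate by `c` and fixing the others. -/
noncomputable def scaleCoord {n : ℕ} (i₀ : Fin n) (c : ℝ) : (Fin n → ℝ) →L[ℝ] (Fin n → ℝ) :=
  LinearMap.toContinuousLinearMap
    (Matrix.toLin' (Matrix.diagonal fun i => if i = i₀ then c else 1))

theorem scaleCoord_apply {n : ℕ} (i₀ : Fin n) (c : ℝ) (v : Fin n → ℝ) :
    scaleCoord i₀ c v = fun i => if i = i₀ then c * v i₀ else v i := by
  ext i
  by_cases h : i = i₀ <;> simp [scaleCoord, Matrix.mulVec_diagonal, h]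

theorem det_scaleCoord {n : ℕ} (i₀ : Fin n) (c : ℝ) : (scaleCoord i₀ c).det = c := by
  simp [scaleCoord, ContinuousLinearMap.det]

theorem det_scaleCoord_comp {n : ℕ} (i₀ : Fin n) (c : ℝ)
    (A : (Fin n → ℝ) →L[ℝ] (Fin n → ℝ)) :
    ((scaleCoord i₀ c).comp A).det = c * A.det := by
  have h := LinearMap.det_comp (scaleCoord i₀ c : (Fin n → ℝ) →ₗ[ℝ] (Fin n → ℝ)) A
  exact h.trans (congrArg (· * A.det) (det_scaleCoord i₀ c))

theorem scaleCoord_bijective {n : ℕ} (i₀ : Fin n) {c : ℝ} (hc : c ≠ 0) :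
    Function.Bijective (scaleCoord i₀ c) := by
  refine Function.bijective_iff_has_inverse.2 ⟨scaleCoord i₀ c⁻¹, fun v => ?_, fun v => ?_⟩ <;>
  · ext i
    by_cases h : i = i₀ <;> simp [scaleCoord_apply, h, hc]

/-- A coordinate of a map with a regular point is not identically zero. -/
theorem exists_coord_ne_zero_of_mem_regPts {n : ℕ} {f : (Fin n → ℝ) → Fin n → ℝ}
    (hf : Differentiable ℝ f) {x : Fin n → ℝ} (hx : x ∈ RegPts n f) (i : Fin n) :
    ∃ y, f y i ≠ 0 := by
  by_contra! h
  obtain ⟨v, hv⟩ := hx.2 (Pi.single i 1)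
  have hd : fderiv ℝ (fun y => f y i) x v = fderiv ℝ f x v i := by
    rw [fderiv_apply (hf x) i]
    rfl
  rw [hv, funext h] at hd
  simp at hd

/-- CASE I family in the proof of Theorem 2: for `θ` smooth with `Reg θ` dense, `i₀` and
`λ ∈ ℝ`, the triple `Φ_λ = (θ, ½∑ᵢθᵢ² + λθ_{i₀}², b)` with `bᵢ = θᵢ` for `i ≠ i₀` and
`b_{i₀} = (1 + 2λ)θ_{i₀}` satisfies the creative condition; the Jacobian determinant of
`b` is `(1 + 2λ)` times that of `θ`; if `λ ≠ −1/2` then `Φ_λ ∈ GX`; and if `λ ≠ 0`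
then `Φ_λ ∉ GY`. -/
theorem caseI_family (n : ℕ) (hn : 1 ≤ n) (i₀ : Fin n) (l : ℝ)
    (θ : (Fin n → ℝ) → Fin n → ℝ) (hθ : ContDiff ℝ (⊤ : ℕ∞) θ) (hreg : Dense (RegPts n θ)) :
    let a : (Fin n → ℝ) → ℝ := fun x => (1 / 2) * (∑ i, θ x i ^ 2) + l * θ x i₀ ^ 2
    let b : (Fin n → ℝ) → Fin n → ℝ :=
      fun x i => if i = i₀ then (1 + 2 * l) * θ x i₀ else θ x i
    Creative n (θ, a, b) ∧
    (∀ x, (fderiv ℝ b x).det = (1 + 2 * l) * (fderiv ℝ θ x).det) ∧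
    (l ≠ -(1 / 2) → (θ, a, b) ∈ GXset n) ∧
    (l ≠ 0 → (θ, a, b) ∉ GYset n) := by
  intro a b
  have hd : Differentiable ℝ θ := hθ.differentiable (by simp)
  have hb : b = scaleCoord i₀ (1 + 2 * l) ∘ θ := by
    ext x i
    simp [b, scaleCoord_apply]
  have hfb (x) : fderiv ℝ b x = (scaleCoord i₀ (1 + 2 * l)).comp (fderiv ℝ θ x) := by
    rw [hb]
    exact ((scaleCoord i₀ (1 + 2 * l)).hasFDerivAt.comp x (hd x).hasFDerivAt).fderiv
  have hcoord (i) : ContDiff ℝ (⊤ : ℕ∞) fun x => θ x i := contDiff_pi.1 hθ i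
  have hcre : Creative n (θ, a, b) := by
    intro x v
    have h (i) : HasFDerivAt (fun y => θ y i) (fderiv ℝ (fun y => θ y i) x) x :=
      ((hcoord i).differentiable (by simp) x).hasFDerivAt
    have ha : HasFDerivAt a _ x :=
      ((HasFDerivAt.fun_sum (u := Finset.univ) fun i _ => (h i).pow 2).const_mul (1 / 2)).add
        (((h i₀).pow 2).const_mul l)
    have hsplit (i) : b x i * fderiv ℝ (fun y => θ y i) x v =
        θ x i * fderiv ℝ (fun y => θ y i) x v +
          if i = i₀ then 2 * l * (θ x i₀ * fderiv ℝ (fun y => θ y i₀) x v) else 0 := by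
      by_cases hi : i = i₀
      · subst hi
        simp only [b, if_true]
        ring
      · simp [b, hi]
    change fderiv ℝ a x v = ∑ i, b x i * fderiv ℝ (fun y => θ y i) x v
    rw [ha.fderiv, Finset.sum_congr rfl fun i _ => hsplit i, Finset.sum_add_distrib]
    simp [Finset.mul_sum]
    ring_nf
  refine ⟨hcre, fun x => by rw [hfb, det_scaleCoord_comp], fun hl => ?_, fun hl => ?_⟩
  · have hc : 1 + 2 * l ≠ 0 := fun h => hl (by linarith)
    refine ⟨⟨hθ, ?_, ?_⟩, hcre, hreg, hreg.mono fun x hx => ?_⟩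
    · exact (contDiff_const.mul (ContDiff.sum fun i _ => (hcoord i).pow 2)).add
        (contDiff_const.mul ((hcoord i₀).pow 2))
    · change ContDiff ℝ _ b
      rw [hb]
      exact (scaleCoord i₀ (1 + 2 * l)).contDiff.comp hθ
    · change Function.Bijective (fderiv ℝ b x)
      rw [hfb]
      exact (scaleCoord_bijective i₀ hc).comp hx
  · rintro ⟨η, -, -, h⟩
    obtain ⟨x, hx⟩ := hreg.nonempty
    obtain ⟨y, hy⟩ := exists_coord_ne_zero_of_mem_regPts hd hx i₀
    simp only [Prod.mk.injEq] at h
    have hby : b y i₀ = θ y i₀ := by rw [h.2.2, h.1]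
    simp only [b, if_true] at hby
    exact mul_ne_zero hl hy (by linarith)
end

section
/- The smooth map φ : ℝ → ℝ², φ(x) = (x², x⁵), is a frontal but not a wavefront: there exists a smooth map ν : ℝ → S¹ with ⟨φ'(x), ν(x)⟩ = 0 for all x ∈ ℝ (for instance ν(x) = (−5x³, 2)/√(25x⁶ + 4)), but for every smooth map ν : ℝ → S¹ satisfying ⟨φ'(x), ν(x)⟩ = 0 for all x ∈ ℝ, the map (φ, ν) : ℝ → ℝ² × S¹ fails to be an immersion (its derivative vanishes at x = 0). -/
theorem hasDerivAt_sq_prod_pow_five (x : ℝ) :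
    HasDerivAt (fun y : ℝ => ((y ^ 2, y ^ 5) : ℝ × ℝ)) (2 * x, 5 * x ^ 4) x := by
  simpa using (hasDerivAt_pow 2 x).prodMk (hasDerivAt_pow 5 x)

/-- A continuous normal `(a, b)` along `x ↦ (x², x⁵)` satisfies `a = -(5/2) x³ b`, also at the
singular point `x = 0`. -/
theorem fst_eq_of_normal_sq_pow_five {a b : ℝ → ℝ} (ha : Continuous a) (hb : Continuous b)
    (h : ∀ x, 2 * x * a x + 5 * x ^ 4 * b x = 0) :
    a = fun x => -(5 / 2) * x ^ 3 * b x := by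
  refine Continuous.ext_on (dense_compl_singleton (0 : ℝ)) ha (by fun_prop) fun x hx => ?_
  refine mul_left_cancel₀ (show x ≠ 0 from hx) ?_
  linear_combination h x / 2

theorem exists_contDiff_unit_normal_sq_pow_five :
    ∃ ν : ℝ → ℝ × ℝ, ContDiff ℝ (⊤ : ℕ∞) ν ∧ (∀ x, (ν x).1 ^ 2 + (ν x).2 ^ 2 = 1) ∧
      ∀ x, 2 * x * (ν x).1 + 5 * x ^ 4 * (ν x).2 = 0 := by
  have hpos : ∀ x : ℝ, 0 < 25 * x ^ 6 + 4 := fun x => by positivity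
  have hsqrt : ∀ x : ℝ, √(25 * x ^ 6 + 4) ≠ 0 := fun x => (Real.sqrt_pos.2 (hpos x)).ne'
  have hsmooth : ContDiff ℝ (⊤ : ℕ∞) fun x : ℝ => √(25 * x ^ 6 + 4) :=
    ContDiff.sqrt (by fun_prop) fun x => (hpos x).ne'
  refine ⟨fun x => (-5 * x ^ 3 / √(25 * x ^ 6 + 4), 2 / √(25 * x ^ 6 + 4)), ?_, fun x => ?_,
    fun x => ?_⟩
  · exact (ContDiff.div (by fun_prop) hsmooth hsqrt).prodMk
      (contDiff_const.div hsmooth hsqrt)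
  · simp only [div_pow, Real.sq_sqrt (hpos x).le]
    field_simp [(hpos x).ne']
    ring
  · ring

theorem deriv_unit_normal_sq_pow_five_zero {a b : ℝ → ℝ} (ha : Differentiable ℝ a)
    (hb : Differentiable ℝ b) (hunit : ∀ x, a x ^ 2 + b x ^ 2 = 1)
    (h : ∀ x, 2 * x * a x + 5 * x ^ 4 * b x = 0) :
    HasDerivAt a 0 0 ∧ HasDerivAt b 0 0 := by
  have hab := fst_eq_of_normal_sq_pow_five ha.continuous hb.continuous h
  have ha0 : a 0 = 0 := by simp [hab]
  have hb' := (hb 0).hasDerivAt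
  have ha' : HasDerivAt a 0 0 := by
    rw [hab]
    exact (((hasDerivAt_pow 3 (0 : ℝ)).const_mul (-(5 / 2) : ℝ)).mul hb').congr_deriv (by simp)
  refine ⟨ha', ?_⟩
  have hsum : HasDerivAt (fun x => a x ^ 2 + b x ^ 2) (2 * b 0 * deriv b 0) 0 := by
    exact ((ha'.pow 2).add (hb'.pow 2)).congr_deriv (by simp)
  have hzero : 2 * b 0 * deriv b 0 = 0 := by
    simp only [hunit] at hsum
    exact hsum.unique (hasDerivAt_const 0 1)
  have hb0 : b 0 ≠ 0 := fun h0 => by simpa [ha0, h0] using hunit 0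
  have hderiv : deriv b 0 = 0 := by simpa [hb0] using hzero
  rwa [hderiv] at hb'

/-- The map `φ(x) = (x², x⁵)` is a frontal but not a wavefront: there is a smooth unit
normal `ν : ℝ → S¹` with `⟨φ'(x), ν(x)⟩ = 0` for all `x`, but for every such `ν` the
Legendre mapping `(φ, ν)` fails to be an immersion, its derivative vanishing at `x = 0`. -/
theorem x2_x5_is_frontal_but_not_wavefront :
    (∃ ν : ℝ → ℝ × ℝ, ContDiff ℝ (⊤ : ℕ∞) ν ∧ (∀ x, (ν x).1 ^ 2 + (ν x).2 ^ 2 = 1) ∧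
      (∀ x, (deriv (fun y : ℝ => ((y ^ 2, y ^ 5) : ℝ × ℝ)) x).1 * (ν x).1
        + (deriv (fun y : ℝ => ((y ^ 2, y ^ 5) : ℝ × ℝ)) x).2 * (ν x).2 = 0)) ∧
    (∀ ν : ℝ → ℝ × ℝ, ContDiff ℝ (⊤ : ℕ∞) ν → (∀ x, (ν x).1 ^ 2 + (ν x).2 ^ 2 = 1) →
      (∀ x, (deriv (fun y : ℝ => ((y ^ 2, y ^ 5) : ℝ × ℝ)) x).1 * (ν x).1
        + (deriv (fun y : ℝ => ((y ^ 2, y ^ 5) : ℝ × ℝ)) x).2 * (ν x).2 = 0) →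
      deriv (fun x : ℝ => (((x ^ 2, x ^ 5) : ℝ × ℝ), ν x)) 0 = 0) := by
  simp only [(hasDerivAt_sq_prod_pow_five _).deriv]
  refine ⟨exists_contDiff_unit_normal_sq_pow_five, fun ν hν hunit h => ?_⟩
  have hdiff : Differentiable ℝ ν := hν.differentiable (by simp)
  obtain ⟨ha, hb⟩ := deriv_unit_normal_sq_pow_five_zero hdiff.fst hdiff.snd hunit h
  have hφ : HasDerivAt (fun y : ℝ => ((y ^ 2, y ^ 5) : ℝ × ℝ)) 0 0 := by
    exact (hasDerivAt_sq_prod_pow_five 0).congr_deriv (by simp)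
  exact (hφ.prodMk (ha.prodMk hb)).deriv
end

section
/- Let ν : ℝ → S¹ be ν(x) = (−5x³, 2)/√(25x⁶ + 4) and a : ℝ → ℝ be a(x) = −3x⁵/√(25x⁶ + 4). Let θ : ℝ → ℝ be any smooth function with (cos θ(x), sin θ(x)) = ν(x). Then θ'(x) = 30x²/(25x⁶ + 4) and a'(x) = (−150x¹⁰ − 60x⁴)/(25x⁶ + 4)^{3/2}; in particular a' is divisible by θ' in the sense that there is a smooth function b : ℝ → ℝ with a'(x) = b(x)·θ'(x) for all x ∈ ℝ, so the line family {H_{(ν(x), a(x))}}_{x ∈ ℝ} is creative. -/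
open Real

theorem hasDerivAt_const_mul_pow_div_sqrt (c : ℝ) (n : ℕ) (x : ℝ) :
    HasDerivAt (fun y : ℝ => c * y ^ n / √(25 * y ^ 6 + 4))
      (c * (n * x ^ (n - 1) * (25 * x ^ 6 + 4) - 75 * x ^ (n + 5)) / √(25 * x ^ 6 + 4) ^ 3) x := by
  have hpos : 0 < 25 * x ^ 6 + 4 := by positivity
  have hs : √(25 * x ^ 6 + 4) ≠ 0 := (Real.sqrt_pos.2 hpos).ne'
  have hsq : √(25 * x ^ 6 + 4) ^ 2 = 25 * x ^ 6 + 4 := Real.sq_sqrt hpos.le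
  have hden := ((((hasDerivAt_pow 6 x).const_mul 25).add_const 4).sqrt hpos.ne')
  refine (((hasDerivAt_pow n x).const_mul c).div hden hs).congr_deriv ?_
  generalize √(25 * x ^ 6 + 4) = s at hs hsq ⊢
  rw [← hsq]
  field_simp
  push_cast
  ring

/-- Example 1: for the frontal `φ(x) = (x², x⁵)` with Gauss mapping
`ν(x) = (−5x³, 2)/√(25x⁶ + 4)` and support function `a(x) = −3x⁵/√(25x⁶ + 4)`, any
smooth angle function `θ` with `(cos θ(x), sin θ(x)) = ν(x)` satisfies
`θ'(x) = 30x²/(25x⁶ + 4)` and `a'(x) = (−150x¹⁰ − 60x⁴)/(25x⁶ + 4)^{3/2}`; in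
particular `a'` is divisible by `θ'` by a smooth function `b`, so the line family
`{H_{(ν(x), a(x))}}` is creative. -/
theorem example_line_family_is_creative (θ : ℝ → ℝ) (hθ : ContDiff ℝ (⊤ : ℕ∞) θ)
    (hθν : ∀ x : ℝ, (Real.cos (θ x), Real.sin (θ x)) =
      ((-5 * x ^ 3 / Real.sqrt (25 * x ^ 6 + 4), 2 / Real.sqrt (25 * x ^ 6 + 4)) : ℝ × ℝ)) :
    (∀ x : ℝ, deriv θ x = 30 * x ^ 2 / (25 * x ^ 6 + 4)) ∧
    (∀ x : ℝ, deriv (fun y : ℝ => -3 * y ^ 5 / Real.sqrt (25 * y ^ 6 + 4)) x =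
      (-150 * x ^ 10 - 60 * x ^ 4) / (25 * x ^ 6 + 4) ^ ((3 : ℝ) / 2)) ∧
    (∃ b : ℝ → ℝ, ContDiff ℝ (⊤ : ℕ∞) b ∧ ∀ x : ℝ,
      deriv (fun y : ℝ => -3 * y ^ 5 / Real.sqrt (25 * y ^ 6 + 4)) x
        = b x * deriv θ x) := by
  have ha : ∀ x : ℝ, deriv (fun y : ℝ => -3 * y ^ 5 / √(25 * y ^ 6 + 4)) x =
      (-150 * x ^ 10 - 60 * x ^ 4) / √(25 * x ^ 6 + 4) ^ 3 := fun x => by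
    rw [(hasDerivAt_const_mul_pow_div_sqrt (-3) 5 x).deriv]
    congr 1
    push_cast
    ring
  have hpos : ∀ x : ℝ, 0 < 25 * x ^ 6 + 4 := fun x => by positivity
  have hs : ∀ x : ℝ, √(25 * x ^ 6 + 4) ≠ 0 := fun x => (Real.sqrt_pos.2 (hpos x)).ne'
  have hsq : ∀ x : ℝ, √(25 * x ^ 6 + 4) ^ 2 = 25 * x ^ 6 + 4 := fun x =>
    Real.sq_sqrt (hpos x).le
  have hθ' : ∀ x : ℝ, deriv θ x = 30 * x ^ 2 / (25 * x ^ 6 + 4) := fun x => by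
    have hcos : (fun y => Real.cos (θ y)) = fun y : ℝ => -5 * y ^ 3 / √(25 * y ^ 6 + 4) :=
      funext fun y => congrArg Prod.fst (hθν y)
    have hsin : Real.sin (θ x) = 2 / √(25 * x ^ 6 + 4) := congrArg Prod.snd (hθν x)
    have hd : HasDerivAt θ (deriv θ x) x := (hθ.differentiable (by simp) x).hasDerivAt
    have key := (hcos ▸ hd.cos).unique (hasDerivAt_const_mul_pow_div_sqrt (-5) 3 x)
    have hnum : (-5 : ℝ) * ((3 : ℕ) * x ^ (3 - 1) * (25 * x ^ 6 + 4) - 75 * x ^ (3 + 5)) =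
        -60 * x ^ 2 := by
      push_cast
      ring
    rw [hsin, hnum] at key
    have h0 := hs x
    rw [← hsq x]
    field_simp at key ⊢
    linarith
  refine ⟨hθ', fun x => ?_, fun x => (-5 * x ^ 8 - 2 * x ^ 2) / √(25 * x ^ 6 + 4), ?_,
    fun x => ?_⟩
  · rw [ha, Real.sqrt_eq_rpow, ← Real.rpow_mul_natCast (hpos x).le]
    norm_num
  · exact ContDiff.div (by fun_prop)
      (ContDiff.sqrt (by fun_prop) fun x => (hpos x).ne') hs
  · have h0 := hs x
    have h2 := hsq x
    rw [ha, hθ']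
    beta_reduce
    generalize √(25 * x ^ 6 + 4) = s at h0 h2 ⊢
    rw [← h2]
    field_simp
    ring
end
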